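/- Suppose (φ, θ, u, p̃) are smooth spatially periodic fields on (0,T) × ℝ^d with θ > 0 everywhere that solve the NACNS system (AC), (IE), (NS), (DF). Then for every smooth periodic test function ω and every t ∈ (0,T): ∫_Ω ∂_ts ω dx − ∫_Ω s (u·∇ω) dx = ∫_Ω (M/θ²)μ² ω dx + ∫_Ω (K/θ²)∇θ·((ω/θ²)∇θ − (1/θ)∇ω) dx + ∫_Ω (η/θ)|Du|² ω dx + ∫_Ω (∇G(∇φ) ∂_tφ + ∇G(∇φ)(∇φ·u))·∇ω dx + ∫_Ω Q ω/θ dx (the weak form of the entropy equation). -/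

import Mathlib

/-!
The weak entropy equation is the strong one, multiplied by `ω` and integrated over a period cell.

Strong form. For a derivative `δ` in any space-time direction, the definitions of `s` and `e` give
the Gibbs relation `θ δs = -θ ∇G(∇φ)·δ(∇φ) + δe - ∂_φ f δφ` (lemma `gibbs`). Take
`δ = Dₜ = ∂ₜ + u·∇`. Commuting `Dₜ` with `∇`,
`∇G(∇φ)·Dₜ(∇φ) = ∇G(∇φ)·∇(Dₜφ) - Σ ∂ᵢG ∂ᵢuⱼ ∂ⱼφ`, and `θ` times the last sum is the Korteweg work
`σ̃:∇u`, which cancels the one in the internal energy equation. Writing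
`∇G(∇φ)·∇(Dₜφ) = div(Dₜφ ∇G(∇φ)) - Dₜφ div ∇G(∇φ)`, the remaining multiples of `Dₜφ` add up to
`-μ Dₜφ`, which is `M μ² / θ` by (AC). Dividing by `θ` and using `div u = 0` yields
`entropy_strong`.

Weak form. The three divergences `div(s u)`, `div(Dₜφ ∇G(∇φ))` and `div(K ∇(1/θ))` are integrated
by parts against `ω`, `ω` and `ω / θ` respectively. There are no boundary terms because all fields
are periodic (`setIntegral_divg_eq_zero`, `integral_divg_mul`). Since `G` and `f` are only `C²`,
the fields `s`, `e` and `∇G(∇φ)` are `C¹`, which is what the divergence theorem and the continuity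
of all integrands need.
-/

open MeasureTheory

noncomputable section

/-- `i`-th spatial partial derivative of a scalar field. -/
def pd {d : ℕ} (i : Fin d) (g : (Fin d → ℝ) → ℝ) (x : Fin d → ℝ) : ℝ :=
  fderiv ℝ g x (Pi.single i 1)

/-- Spatial gradient of a scalar field. -/
def grad {d : ℕ} (g : (Fin d → ℝ) → ℝ) (x : Fin d → ℝ) : Fin d → ℝ :=
  fun i => pd i g x

/-- Divergence of a vector field. -/
def divg {d : ℕ} (u : (Fin d → ℝ) → Fin d → ℝ) (x : Fin d → ℝ) : ℝ :=
  ∑ i, pd i (fun y => u y i) x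

/-- Euclidean dot product. -/
def dot {d : ℕ} (a b : Fin d → ℝ) : ℝ := ∑ i, a i * b i

/-- Time derivative of a time-dependent scalar field. -/
def dt {d : ℕ} (g : ℝ → (Fin d → ℝ) → ℝ) (t : ℝ) (x : Fin d → ℝ) : ℝ :=
  deriv (fun s => g s x) t

/-- The box `Ω = [0, L₁] × ⋯ × [0, L_d]`. -/
def box {d : ℕ} (L : Fin d → ℝ) : Set (Fin d → ℝ) :=
  Set.univ.pi fun i => Set.Icc 0 (L i)

/-- Spatial periodicity with periods `L`. -/
def SpacePeriodic {d : ℕ} (L : Fin d → ℝ) (g : (Fin d → ℝ) → ℝ) : Prop :=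
  ∀ x i, g (x + Pi.single i (L i)) = g x

/-- Entropy density `s = -G(∇φ) - ∂_θ f(φ, θ)`. -/
def entS {d : ℕ} (G : (Fin d → ℝ) → ℝ) (f : ℝ → ℝ → ℝ)
    (φ θ : ℝ → (Fin d → ℝ) → ℝ) (t : ℝ) (x : Fin d → ℝ) : ℝ :=
  -G (grad (φ t) x) - deriv (f (φ t x)) (θ t x)

/-- Internal energy density `e = f(φ, θ) - θ ∂_θ f(φ, θ)`. -/
def intE {d : ℕ} (f : ℝ → ℝ → ℝ) (φ θ : ℝ → (Fin d → ℝ) → ℝ)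
    (t : ℝ) (x : Fin d → ℝ) : ℝ :=
  f (φ t x) (θ t x) - θ t x * deriv (f (φ t x)) (θ t x)

/-- Total energy density `e_tot = e + |u|²/2`. -/
def totE {d : ℕ} (f : ℝ → ℝ → ℝ) (φ θ : ℝ → (Fin d → ℝ) → ℝ)
    (u : ℝ → (Fin d → ℝ) → Fin d → ℝ) (t : ℝ) (x : Fin d → ℝ) : ℝ :=
  intE f φ θ t x + (1 / 2) * ∑ i, (u t x i) ^ 2

/-- Chemical potential `μ = -θ div(∇G(∇φ)) + ∂_φ f(φ, θ)`. -/
def chemMu {d : ℕ} (G : (Fin d → ℝ) → ℝ) (f : ℝ → ℝ → ℝ)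
    (φ θ : ℝ → (Fin d → ℝ) → ℝ) (t : ℝ) (x : Fin d → ℝ) : ℝ :=
  -θ t x * divg (fun y => grad G (grad (φ t) y)) x
    + deriv (fun a => f a (θ t x)) (φ t x)

/-- Korteweg stress `σ̃ᵢⱼ = θ (∇G(∇φ))ᵢ ∂ⱼφ`. -/
def korteweg {d : ℕ} (G : (Fin d → ℝ) → ℝ)
    (φ θ : ℝ → (Fin d → ℝ) → ℝ) (t : ℝ) (x : Fin d → ℝ) (i j : Fin d) : ℝ :=
  θ t x * grad G (grad (φ t) x) i * pd j (φ t) x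

/-- Symmetric gradient `Dw = (∇w + (∇w)ᵀ)/2` of a (spatial) vector field. -/
def symGrad {d : ℕ} (w : (Fin d → ℝ) → Fin d → ℝ) (x : Fin d → ℝ) (i j : Fin d) : ℝ :=
  (pd i (fun y => w y j) x + pd j (fun y => w y i) x) / 2

/-! ### Divergence theorem on a period cell -/

/-- The flux of a periodic field through opposite faces of the box cancels. The divergence theorem
is available in dimension `n + 1` only, which is where `d ≠ 0` enters. -/
lemma setIntegral_divg_eq_zero {d : ℕ} (hd : d ≠ 0) {L : Fin d → ℝ} (hL : ∀ i, 0 < L i)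
    {V : (Fin d → ℝ) → Fin d → ℝ} (hV : ∀ i, ContDiff ℝ 1 fun x => V x i)
    (hper : ∀ i, SpacePeriodic L fun x => V x i) :
    ∫ x in box L, divg V x = 0 := by
  obtain ⟨n, rfl⟩ : ∃ n, d = n + 1 := Nat.exists_eq_succ_of_ne_zero hd
  have hbox : box L = Set.Icc 0 L := by
    rw [← Set.pi_univ_Icc]; rfl
  have hcont : Continuous (divg V) := by
    unfold divg pd
    exact continuous_finsetSum _ fun i _ =>
      ((hV i).continuous_fderiv one_ne_zero).clm_apply continuous_const
  have h := integral_divergence_of_hasFDerivAt_off_countable' (E := ℝ) 0 L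
    (fun i => (hL i).le) (fun i x => V x i) (fun i x => fderiv ℝ (fun y => V y i) x) ∅
    Set.countable_empty (fun i => (hV i).continuous.continuousOn)
    (fun x _ i => ((hV i).differentiable one_ne_zero x).hasFDerivAt)
    (hcont.continuousOn.integrableOn_compact isCompact_Icc)
  rw [hbox]
  refine h.trans (Finset.sum_eq_zero fun i _ => ?_)
  have : ∀ x : Fin n → ℝ, V (i.insertNth (L i) x) i = V (i.insertNth (0 : ℝ) x) i := by
    intro x
    have h1 : (i.insertNth (L i) x : Fin (n + 1) → ℝ)
        = i.insertNth (0 : ℝ) x + Pi.single i (L i) := by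
      simpa [Fin.insertNth_zero_right] using Fin.insertNth_add (α := fun _ => ℝ) i 0 (L i) x 0
    rw [h1]
    exact hper i _ i
  simp only [this]
  exact sub_self _

section Spatial

variable {d : ℕ} {L : Fin d → ℝ}

lemma pd_mul {g h : (Fin d → ℝ) → ℝ} {x : Fin d → ℝ} (hg : DifferentiableAt ℝ g x)
    (hh : DifferentiableAt ℝ h x) (i : Fin d) :
    pd i (fun y => g y * h y) x = pd i g x * h x + g x * pd i h x := by
  simp [pd, fderiv_fun_mul hg hh]; ring

lemma pd_add {g h : (Fin d → ℝ) → ℝ} {x : Fin d → ℝ} (hg : DifferentiableAt ℝ g x)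
    (hh : DifferentiableAt ℝ h x) (i : Fin d) :
    pd i (fun y => g y + h y) x = pd i g x + pd i h x := by
  simp [pd, fderiv_fun_add hg hh]

lemma pd_inv {g : (Fin d → ℝ) → ℝ} {x : Fin d → ℝ} (hg : DifferentiableAt ℝ g x)
    (h0 : g x ≠ 0) (i : Fin d) :
    pd i (fun y => (g y)⁻¹) x = -(pd i g x) / (g x) ^ 2 := by
  have := ((hasDerivAt_inv h0).comp_hasFDerivAt x hg.hasFDerivAt).fderiv
  change fderiv ℝ (fun y => (g y)⁻¹) x = _ at this
  simp [pd, this]; field_simp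

lemma pd_sum {g : Fin d → (Fin d → ℝ) → ℝ} {x : Fin d → ℝ}
    (hg : ∀ j, DifferentiableAt ℝ (g j) x) (i : Fin d) :
    pd i (fun y => ∑ j, g j y) x = ∑ j, pd i (g j) x := by
  simp [pd, fderiv_fun_sum fun j _ => hg j]

lemma continuous_pd {g : (Fin d → ℝ) → ℝ} (hg : ContDiff ℝ 1 g) (i : Fin d) :
    Continuous (pd i g) :=
  (hg.continuous_fderiv one_ne_zero).clm_apply continuous_const

lemma continuous_divg {V : (Fin d → ℝ) → Fin d → ℝ} (hV : ∀ i, ContDiff ℝ 1 fun x => V x i) :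
    Continuous (divg V) :=
  continuous_finsetSum _ fun i _ => continuous_pd (hV i) i

lemma integrableOn_box {g : (Fin d → ℝ) → ℝ} (hg : Continuous g) :
    IntegrableOn g (box L) :=
  hg.continuousOn.integrableOn_compact (isCompact_univ_pi fun _ => isCompact_Icc)

lemma SpacePeriodic.pd {g : (Fin d → ℝ) → ℝ} (hg : SpacePeriodic L g) (i : Fin d) :
    SpacePeriodic L (pd i g) := by
  intro x j
  have : (fun y => g (y + Pi.single j (L j))) = g := funext fun y => hg y j
  unfold _root_.pd
  rw [← fderiv_comp_add_right, this]

lemma SpacePeriodic.grad {g : (Fin d → ℝ) → ℝ} (hg : SpacePeriodic L g) (x i) :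
    grad g (x + Pi.single i (L i)) = grad g x :=
  funext fun j => hg.pd j x i

/-- Integration by parts over a period cell. -/
lemma integral_divg_mul {V : (Fin d → ℝ) → Fin d → ℝ} {w : (Fin d → ℝ) → ℝ} (hd : d ≠ 0)
    (hL : ∀ i, 0 < L i) (hV : ∀ i, ContDiff ℝ 1 fun x => V x i) (hw : ContDiff ℝ 1 w)
    (hVper : ∀ i, SpacePeriodic L fun x => V x i) (hwper : SpacePeriodic L w) :
    ∫ x in box L, divg V x * w x = -∫ x in box L, ∑ i, V x i * pd i w x := by
  have h0 := setIntegral_divg_eq_zero hd hL (V := fun x i => V x i * w x)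
    (fun i => (hV i).mul hw) (fun i x j => by simp only [hVper i x j, hwper x j])
  have h1 : ∀ x, divg (fun x i => V x i * w x) x
      = divg V x * w x + ∑ i, V x i * pd i w x := by
    intro x
    simp only [divg, Finset.sum_mul, ← Finset.sum_add_distrib]
    exact Finset.sum_congr rfl fun i _ =>
      pd_mul ((hV i).differentiable one_ne_zero x) (hw.differentiable one_ne_zero x) i
  simp only [h1] at h0
  have i1 : IntegrableOn (fun x => divg V x * w x) (box L) :=
    integrableOn_box ((continuous_divg hV).mul hw.continuous)
  have i2 : IntegrableOn (fun x => ∑ i, V x i * pd i w x) (box L) :=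
    integrableOn_box (continuous_finsetSum _ fun i _ =>
      (hV i).continuous.mul (continuous_pd hw i))
  rw [integral_add i1 i2] at h0
  linarith

end Spatial

/-! ### Space-time derivatives -/

section SpaceTime

variable {d : ℕ}

/-- A spatial partial derivative is a directional derivative in space-time, so that `∂ₜ` and `∂ᵢ`
can be treated on the same footing. -/
lemma pd_eq_fderiv {g : ℝ → (Fin d → ℝ) → ℝ} {t : ℝ} {x : Fin d → ℝ}
    (hg : DifferentiableAt ℝ (fun q : ℝ × (Fin d → ℝ) => g q.1 q.2) (t, x)) (i : Fin d) :
    pd i (g t) x = fderiv ℝ (fun q : ℝ × (Fin d → ℝ) => g q.1 q.2) (t, x) (0, Pi.single i 1) := by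
  have h := hg.hasFDerivAt.comp x (hasFDerivAt_prodMk_right t x)
  have := h.fderiv
  unfold pd
  change fderiv ℝ ((fun q : ℝ × (Fin d → ℝ) => g q.1 q.2) ∘ fun y => (t, y)) x _ = _
  rw [this]
  simp

lemma dt_eq_fderiv {g : ℝ → (Fin d → ℝ) → ℝ} {t : ℝ} {x : Fin d → ℝ}
    (hg : DifferentiableAt ℝ (fun q : ℝ × (Fin d → ℝ) => g q.1 q.2) (t, x)) :
    dt g t x = fderiv ℝ (fun q : ℝ × (Fin d → ℝ) => g q.1 q.2) (t, x) (1, 0) := by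
  have h := hg.hasFDerivAt.comp t (hasFDerivAt_prodMk_left (𝕜 := ℝ) t x)
  have := h.hasDerivAt.deriv
  unfold dt
  change deriv ((fun q : ℝ × (Fin d → ℝ) => g q.1 q.2) ∘ fun y => (y, x)) t = _
  rw [this]
  simp

variable {g : ℝ → (Fin d → ℝ) → ℝ} {m n : WithTop ℕ∞}

lemma contDiff_pd (hg : ContDiff ℝ n fun q : ℝ × (Fin d → ℝ) => g q.1 q.2) (hmn : m + 1 ≤ n)
    (i : Fin d) : ContDiff ℝ m fun q : ℝ × (Fin d → ℝ) => pd i (g q.1) q.2 := by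
  have hd : Differentiable ℝ fun q : ℝ × (Fin d → ℝ) => g q.1 q.2 :=
    (hg.of_le (le_add_self.trans hmn)).differentiable one_ne_zero
  simp only [fun q : ℝ × (Fin d → ℝ) => pd_eq_fderiv (hd (q.1, q.2)) i]
  exact (hg.fderiv_right hmn).clm_apply contDiff_const

lemma contDiff_dt (hg : ContDiff ℝ n fun q : ℝ × (Fin d → ℝ) => g q.1 q.2) (hmn : m + 1 ≤ n) :
    ContDiff ℝ m fun q : ℝ × (Fin d → ℝ) => dt g q.1 q.2 := by
  have hd : Differentiable ℝ fun q : ℝ × (Fin d → ℝ) => g q.1 q.2 :=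
    (hg.of_le (le_add_self.trans hmn)).differentiable one_ne_zero
  simp only [fun q : ℝ × (Fin d → ℝ) => dt_eq_fderiv (hd (q.1, q.2))]
  exact (hg.fderiv_right hmn).clm_apply contDiff_const

lemma contDiff_slice {F : Type*} [NormedAddCommGroup F] [NormedSpace ℝ F]
    {g : ℝ → (Fin d → ℝ) → F}
    (hg : ContDiff ℝ n fun q : ℝ × (Fin d → ℝ) => g q.1 q.2) (t : ℝ) :
    ContDiff ℝ n (g t) :=
  hg.comp (contDiff_const.prodMk contDiff_id)

lemma fderiv_fderiv_symm {X : Type*} [NormedAddCommGroup X] [NormedSpace ℝ X] {g : X → ℝ}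
    (hg : ContDiff ℝ 2 g) (q v w : X) :
    fderiv ℝ (fun p => fderiv ℝ g p v) q w = fderiv ℝ (fun p => fderiv ℝ g p w) q v := by
  have hs : IsSymmSndFDerivAt ℝ g q := hg.contDiffAt.isSymmSndFDerivAt (by simp)
  have hd : DifferentiableAt ℝ (fderiv ℝ g) q :=
    (hg.fderiv_right (m := 1) (by norm_num)).differentiable one_ne_zero q
  rw [fderiv_clm_apply hd (by fun_prop), fderiv_clm_apply hd (by fun_prop)]
  simpa using hs w v

/-- Schwarz's theorem for a time and a space derivative. -/
lemma dt_pd (hg : ContDiff ℝ 2 fun q : ℝ × (Fin d → ℝ) => g q.1 q.2) (i : Fin d) (t x) :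
    dt (fun s y => pd i (g s) y) t x = pd i (dt g t) x := by
  have hd : Differentiable ℝ fun q : ℝ × (Fin d → ℝ) => g q.1 q.2 :=
    hg.differentiable two_ne_zero
  rw [dt_eq_fderiv ((contDiff_pd hg (m := 1) (by norm_num) i).differentiable one_ne_zero _),
    pd_eq_fderiv ((contDiff_dt hg (m := 1) (by norm_num)).differentiable one_ne_zero _)]
  simp only [fun q : ℝ × (Fin d → ℝ) => dt_eq_fderiv (hd (q.1, q.2)),
    fun q : ℝ × (Fin d → ℝ) => pd_eq_fderiv (hd (q.1, q.2)) i]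
  exact fderiv_fderiv_symm hg _ _ _

/-- Schwarz's theorem for two space derivatives. -/
lemma pd_pd {g : (Fin d → ℝ) → ℝ} (hg : ContDiff ℝ 2 g) (i j : Fin d) (x) :
    pd i (pd j g) x = pd j (pd i g) x :=
  fderiv_fderiv_symm hg _ _ _

end SpaceTime

/-! ### The Gibbs relation -/

section Thermo

variable {X : Type*} [NormedAddCommGroup X] [NormedSpace ℝ X]

lemma fderiv_comp_eq_sum {d : ℕ} {G : (Fin d → ℝ) → ℝ} (hG : Differentiable ℝ G)
    {P : X → Fin d → ℝ} {q : X} (hP : ∀ i, DifferentiableAt ℝ (fun p => P p i) q) (v : X) :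
    fderiv ℝ (fun p => G (P p)) q v = ∑ i, grad G (P q) i * fderiv ℝ (fun p => P p i) q v := by
  have hP' : HasFDerivAt P (ContinuousLinearMap.pi fun i => fderiv ℝ (fun p => P p i) q) q :=
    hasFDerivAt_pi.2 fun i => (hP i).hasFDerivAt
  have := ((hG (P q)).hasFDerivAt.comp q hP').fderiv
  change fderiv ℝ (G ∘ P) q v = _
  rw [this, ContinuousLinearMap.comp_apply]
  conv_lhs => rw [pi_eq_sum_univ' ((ContinuousLinearMap.pi fun i => fderiv ℝ (fun p => P p i) q) v)]
  rw [map_sum]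
  refine Finset.sum_congr rfl fun i _ => ?_
  rw [map_smul]
  simp only [grad, pd, ContinuousLinearMap.coe_pi', smul_eq_mul]
  rw [mul_comm]

/-- `∂_θ f` evaluated along `C¹` fields is `C¹`. Since `f` is regular only on `ℝ × (0, ∞)`, the
positivity of the temperature is essential. -/
lemma contDiff_deriv_snd {f : ℝ → ℝ → ℝ}
    (hf : ContDiffOn ℝ 2 (fun q : ℝ × ℝ => f q.1 q.2) (Set.univ ×ˢ Set.Ioi 0))
    {Φ Θ : X → ℝ} (hΦ : ContDiff ℝ 1 Φ) (hΘ : ContDiff ℝ 1 Θ) (hpos : ∀ q, 0 < Θ q) :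
    ContDiff ℝ 1 fun q => deriv (f (Φ q)) (Θ q) := by
  have ho : IsOpen ((Set.univ : Set ℝ) ×ˢ Set.Ioi (0 : ℝ)) := isOpen_univ.prod isOpen_Ioi
  have hmem : ∀ q, (Φ q, Θ q) ∈ (Set.univ : Set ℝ) ×ˢ Set.Ioi (0 : ℝ) := fun q => ⟨trivial, hpos q⟩
  have h1 : ∀ q, deriv (f (Φ q)) (Θ q)
      = fderiv ℝ (fun q : ℝ × ℝ => f q.1 q.2) (Φ q, Θ q) (0, 1) := by
    intro q
    have hd := ((hf.differentiableOn two_ne_zero).differentiableAt (ho.mem_nhds (hmem q)))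
    have := (hd.hasFDerivAt.comp (Θ q) (hasFDerivAt_prodMk_right (Φ q) (Θ q))).hasDerivAt.deriv
    change deriv ((fun q : ℝ × ℝ => f q.1 q.2) ∘ fun y => (Φ q, y)) (Θ q) = _
    rw [this]
    simp
  simp only [h1]
  refine ContDiff.clm_apply ?_ contDiff_const
  exact (hf.fderiv_of_isOpen ho (m := 1) (by norm_num)).comp_contDiff (hΦ.prodMk hΘ) hmem

/-- Chain rule for `f(Φ, Θ)`. -/
lemma fderiv_comp_two {f : ℝ → ℝ → ℝ} {Φ Θ : X → ℝ} {q : X}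
    (hf : DifferentiableAt ℝ (fun q : ℝ × ℝ => f q.1 q.2) (Φ q, Θ q))
    (hΦ : DifferentiableAt ℝ Φ q) (hΘ : DifferentiableAt ℝ Θ q) (v : X) :
    fderiv ℝ (fun p => f (Φ p) (Θ p)) q v
      = deriv (fun a => f a (Θ q)) (Φ q) * fderiv ℝ Φ q v
        + deriv (f (Φ q)) (Θ q) * fderiv ℝ Θ q v := by
  have h1 := (hf.hasFDerivAt.comp (Θ q) (hasFDerivAt_prodMk_right (Φ q) (Θ q))).hasDerivAt.deriv
  have h2 := (hf.hasFDerivAt.comp (Φ q) (hasFDerivAt_prodMk_left (Φ q) (Θ q))).hasDerivAt.deriv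
  have h3 := (hf.hasFDerivAt.comp q (hΦ.hasFDerivAt.prodMk hΘ.hasFDerivAt)).fderiv
  change deriv (f (Φ q)) (Θ q) = _ at h1
  change deriv (fun a => f a (Θ q)) (Φ q) = _ at h2
  change fderiv ℝ (fun p => f (Φ p) (Θ p)) q = _ at h3
  rw [h1, h2, h3]
  simp only [ContinuousLinearMap.comp_apply, ContinuousLinearMap.prod_apply,
    ContinuousLinearMap.inl_apply, ContinuousLinearMap.inr_apply]
  rw [mul_comm, ← smul_eq_mul, mul_comm _ (fderiv ℝ Θ q v), ← smul_eq_mul (fderiv ℝ Θ q v),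
    ← map_smul, ← map_smul, ← map_add]
  simp

/-- Gibbs relation `θ δs = -θ ∇G(∇φ)·δ(∇φ) + δe - ∂_φ f δφ` for the derivative `δ` in an arbitrary
direction `v`; here `P` stands for `∇φ`. The terms `∂_θ f δθ` cancel in `δe`. -/
lemma gibbs {d : ℕ} {G : (Fin d → ℝ) → ℝ} (hG : Differentiable ℝ G) {f : ℝ → ℝ → ℝ}
    (hf : ContDiffOn ℝ 2 (fun q : ℝ × ℝ => f q.1 q.2) (Set.univ ×ˢ Set.Ioi 0))
    {Φ Θ : X → ℝ} {P : X → Fin d → ℝ} (hΦ : ContDiff ℝ 1 Φ) (hΘ : ContDiff ℝ 1 Θ)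
    (hpos : ∀ q, 0 < Θ q) (hP : ∀ i, ContDiff ℝ 1 fun p => P p i) (q v : X) :
    Θ q * fderiv ℝ (fun p => -G (P p) - deriv (f (Φ p)) (Θ p)) q v
      = -(Θ q * ∑ i, grad G (P q) i * fderiv ℝ (fun p => P p i) q v)
        + fderiv ℝ (fun p => f (Φ p) (Θ p) - Θ p * deriv (f (Φ p)) (Θ p)) q v
        - deriv (fun a => f a (Θ q)) (Φ q) * fderiv ℝ Φ q v := by
  have hP' : DifferentiableAt ℝ P q := differentiableAt_pi.2 fun i =>
    (hP i).differentiable one_ne_zero q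
  have hGP : DifferentiableAt ℝ (fun p => G (P p)) q := (hG (P q)).comp q hP'
  have hS := (contDiff_deriv_snd hf hΦ hΘ hpos).differentiable one_ne_zero q
  have hΘ' := hΘ.differentiable one_ne_zero q
  have hΦ' := hΦ.differentiable one_ne_zero q
  have ho : IsOpen ((Set.univ : Set ℝ) ×ˢ Set.Ioi (0 : ℝ)) := isOpen_univ.prod isOpen_Ioi
  have hfd : DifferentiableAt ℝ (fun q : ℝ × ℝ => f q.1 q.2) (Φ q, Θ q) :=
    (hf.differentiableOn two_ne_zero).differentiableAt (ho.mem_nhds ⟨trivial, hpos q⟩)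
  have hF : DifferentiableAt ℝ (fun p => f (Φ p) (Θ p)) q :=
    DifferentiableAt.comp q (g := fun q : ℝ × ℝ => f q.1 q.2) hfd (hΦ'.prodMk hΘ')
  rw [fderiv_fun_sub hGP.fun_neg hS, fderiv_fun_neg, fderiv_fun_sub hF (hΘ'.fun_mul hS),
    fderiv_fun_mul hΘ' hS]
  simp only [_root_.sub_apply, _root_.add_apply,
    _root_.neg_apply, _root_.smul_apply, smul_eq_mul]
  rw [fderiv_comp_two hfd hΦ' hΘ', fderiv_comp_eq_sum hG
    (fun i => (hP i).differentiable one_ne_zero q)]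
  ring

end Thermo

/-! ### The entropy equation -/

section Entropy

variable {d : ℕ}

lemma contDiff_pd_space {g : (Fin d → ℝ) → ℝ} (hg : ContDiff ℝ 2 g) (i : Fin d) :
    ContDiff ℝ 1 (pd i g) :=
  (hg.fderiv_right (m := 1) (by norm_num)).clm_apply contDiff_const

lemma contDiff_gradG {G : (Fin d → ℝ) → ℝ} (hG : ContDiff ℝ 2 G) {g : (Fin d → ℝ) → ℝ}
    (hg : ContDiff ℝ 2 g) (i : Fin d) :
    ContDiff ℝ 1 fun y => grad G (grad g y) i :=
  (contDiff_pd_space hG i).comp (contDiff_pi.2 fun j => contDiff_pd_space hg j)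

variable {G : (Fin d → ℝ) → ℝ} {f : ℝ → ℝ → ℝ} {φ θ : ℝ → (Fin d → ℝ) → ℝ}
  {u : ℝ → (Fin d → ℝ) → Fin d → ℝ}

lemma contDiff_entS (hG : ContDiff ℝ 2 G)
    (hf : ContDiffOn ℝ 2 (fun q : ℝ × ℝ => f q.1 q.2) (Set.univ ×ˢ Set.Ioi 0))
    (hφ : ContDiff ℝ 2 fun q : ℝ × (Fin d → ℝ) => φ q.1 q.2)
    (hθ : ContDiff ℝ 1 fun q : ℝ × (Fin d → ℝ) => θ q.1 q.2) (hpos : ∀ t x, 0 < θ t x) :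
    ContDiff ℝ 1 fun q : ℝ × (Fin d → ℝ) => entS G f φ θ q.1 q.2 := by
  have h1 : ContDiff ℝ 1 fun q : ℝ × (Fin d → ℝ) => grad (φ q.1) q.2 :=
    contDiff_pi.2 fun j => contDiff_pd hφ (by norm_num) j
  exact ((hG.of_le one_le_two).comp h1).neg.sub
    (contDiff_deriv_snd hf (hφ.of_le one_le_two) hθ fun q => hpos q.1 q.2)

lemma contDiff_intE
    (hf : ContDiffOn ℝ 2 (fun q : ℝ × ℝ => f q.1 q.2) (Set.univ ×ˢ Set.Ioi 0))
    (hφ : ContDiff ℝ 1 fun q : ℝ × (Fin d → ℝ) => φ q.1 q.2)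
    (hθ : ContDiff ℝ 1 fun q : ℝ × (Fin d → ℝ) => θ q.1 q.2) (hpos : ∀ t x, 0 < θ t x) :
    ContDiff ℝ 1 fun q : ℝ × (Fin d → ℝ) => intE f φ θ q.1 q.2 :=
  ((hf.of_le one_le_two).comp_contDiff (hφ.prodMk hθ)
    (fun q => ⟨trivial, hpos q.1 q.2⟩)).sub
    (hθ.mul (contDiff_deriv_snd hf hφ hθ fun q => hpos q.1 q.2))

/-- The entropy equation in strong form,
`∂ₜs + div(s u) = (m/θ²) μ² - div J / θ + visc / θ - div((∂ₜφ + u·∇φ) ∇G(∇φ)) + Q / θ`,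
at a single point; `m`, `divJ`, `visc`, `Qv` are the values there of the mobility, of the divergence
of the heat flux, of the viscous dissipation and of the heat source. -/
lemma entropy_strong (hG : ContDiff ℝ 2 G)
    (hf : ContDiffOn ℝ 2 (fun q : ℝ × ℝ => f q.1 q.2) (Set.univ ×ˢ Set.Ioi 0))
    (hφ : ContDiff ℝ 2 fun q : ℝ × (Fin d → ℝ) => φ q.1 q.2)
    (hθ : ContDiff ℝ 1 fun q : ℝ × (Fin d → ℝ) => θ q.1 q.2)
    (hu : ContDiff ℝ 1 fun q : ℝ × (Fin d → ℝ) => u q.1 q.2)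
    (hpos : ∀ t x, 0 < θ t x) {t : ℝ} {x : Fin d → ℝ} {m divJ visc Qv : ℝ}
    (hAC : dt φ t x + dot (u t x) (grad (φ t) x) = -m * chemMu G f φ θ t x / θ t x)
    (hIE : dt (intE f φ θ) t x + dot (u t x) (grad (intE f φ θ t) x)
      = -divJ + visc - (∑ i, ∑ j, korteweg G φ θ t x i j * pd i (fun y => u t y j) x) + Qv)
    (hDF : divg (u t) x = 0) :
    dt (entS G f φ θ) t x + divg (fun y i => entS G f φ θ t y * u t y i) x
      = m / (θ t x) ^ 2 * (chemMu G f φ θ t x) ^ 2 - divJ / θ t x + visc / θ t x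
        - divg (fun y i => (dt φ t y + dot (u t y) (grad (φ t) y)) * grad G (grad (φ t) y) i) x
        + Qv / θ t x := by
  have hφ1 : ContDiff ℝ 1 fun q : ℝ × (Fin d → ℝ) => φ q.1 q.2 := hφ.of_le one_le_two
  have hs := contDiff_entS hG hf hφ hθ hpos
  have he := contDiff_intE hf hφ1 hθ hpos
  have hφi : ∀ i, ContDiff ℝ 1 fun q : ℝ × (Fin d → ℝ) => pd i (φ q.1) q.2 :=
    contDiff_pd hφ (by norm_num)
  have hφt := contDiff_dt hφ (m := 1) (by norm_num)
  have hgibbs := gibbs (hG.differentiable two_ne_zero) hf hφ1 hθ (fun q => hpos q.1 q.2)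
    (P := fun q : ℝ × (Fin d → ℝ) => grad (φ q.1) q.2) hφi (t, x)
  set g := fun i => grad G (grad (φ t) x) i with hg
  set fφ := deriv (fun a => f a (θ t x)) (φ t x) with hfφ
  -- The Gibbs relation in the time direction, and in each space direction (`Gx`).
  have Gt : θ t x * dt (entS G f φ θ) t x
      = -(θ t x * ∑ i, g i * pd i (dt φ t) x) + dt (intE f φ θ) t x - fφ * dt φ t x := by
    simp only [← dt_pd hφ]
    rw [dt_eq_fderiv (hs.differentiable one_ne_zero _),
      dt_eq_fderiv (he.differentiable one_ne_zero _),
      dt_eq_fderiv (hφ1.differentiable one_ne_zero _)]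
    simp only [fun i => dt_eq_fderiv (g := fun s y => pd i (φ s) y) (t := t) (x := x)
      ((hφi i).differentiable one_ne_zero _)]
    exact hgibbs (1, 0)
  have Gx : ∀ j, θ t x * pd j (entS G f φ θ t) x
      = -(θ t x * ∑ i, g i * pd i (pd j (φ t)) x) + pd j (intE f φ θ t) x
        - fφ * pd j (φ t) x := by
    intro j
    simp only [fun i => pd_pd (contDiff_slice hφ t) i j x]
    rw [pd_eq_fderiv (hs.differentiable one_ne_zero _),
      pd_eq_fderiv (he.differentiable one_ne_zero _),
      pd_eq_fderiv (hφ1.differentiable one_ne_zero _)]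
    simp only [fun i => pd_eq_fderiv (g := fun s y => pd i (φ s) y) (t := t) (x := x)
      ((hφi i).differentiable one_ne_zero _)]
    exact hgibbs (0, Pi.single j 1)
  have du : ∀ j, DifferentiableAt ℝ (fun y => u t y j) x := fun j =>
    (contDiff_pi.1 (contDiff_slice hu t) j).differentiable one_ne_zero x
  have ds : DifferentiableAt ℝ (entS G f φ θ t) x :=
    (contDiff_slice hs t).differentiable one_ne_zero x
  have dφt : DifferentiableAt ℝ (dt φ t) x :=
    (contDiff_slice hφt t).differentiable one_ne_zero x
  have dφi : ∀ i, DifferentiableAt ℝ (pd i (φ t)) x := fun i =>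
    (contDiff_pd_space (contDiff_slice hφ t) i).differentiable one_ne_zero x
  have dg : ∀ i, DifferentiableAt ℝ (fun y => grad G (grad (φ t) y) i) x := fun i =>
    (contDiff_gradG hG (contDiff_slice hφ t) i).differentiable one_ne_zero x
  have dprod : ∀ j, DifferentiableAt ℝ (fun y => u t y j * pd j (φ t) y) x := fun j =>
    (du j).fun_mul (dφi j)
  have ddot : DifferentiableAt ℝ (fun y => dot (u t y) (grad (φ t) y)) x :=
    DifferentiableAt.fun_sum fun j _ => dprod j
  -- The gradient of the material derivative produces the commutator `∂ᵢuⱼ ∂ⱼφ`.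
  have pD : ∀ i, pd i (fun y => dt φ t y + dot (u t y) (grad (φ t) y)) x
      = pd i (dt φ t) x
        + ∑ j, (pd i (fun y => u t y j) x * pd j (φ t) x + u t x j * pd i (pd j (φ t)) x) := by
    intro i
    rw [pd_add dφt ddot]
    congr 1
    refine (pd_sum dprod i).trans (Finset.sum_congr rfl fun j _ => pd_mul (du j) (dφi j) i)
  have e1 : divg (fun y i => entS G f φ θ t y * u t y i) x
      = ∑ j, u t x j * pd j (entS G f φ θ t) x := by
    have : divg (fun y i => entS G f φ θ t y * u t y i) x
        = ∑ j, u t x j * pd j (entS G f φ θ t) x + entS G f φ θ t x * divg (u t) x := by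
      unfold divg
      rw [Finset.mul_sum, ← Finset.sum_add_distrib]
      refine Finset.sum_congr rfl fun j _ => ?_
      rw [pd_mul ds (du j)]; ring
    rw [this, hDF]; ring
  have e2 : divg (fun y i => (dt φ t y + dot (u t y) (grad (φ t) y))
        * grad G (grad (φ t) y) i) x
      = ∑ i, g i * pd i (dt φ t) x + ∑ i, ∑ j, g i * pd j (φ t) x * pd i (fun y => u t y j) x
        + ∑ j, u t x j * ∑ i, g i * pd i (pd j (φ t)) x
        + (dt φ t x + dot (u t x) (grad (φ t) x))
          * divg (fun y => grad G (grad (φ t) y)) x := by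
    simp only [Finset.mul_sum]
    rw [Finset.sum_comm (f := fun j i => u t x j * (g i * pd i (pd j (φ t)) x))]
    unfold divg
    rw [Finset.mul_sum, ← Finset.sum_add_distrib, ← Finset.sum_add_distrib,
      ← Finset.sum_add_distrib]
    refine Finset.sum_congr rfl fun i _ => ?_
    have s1 : ∑ j, g i * pd j (φ t) x * pd i (fun y => u t y j) x
        = g i * ∑ j, pd i (fun y => u t y j) x * pd j (φ t) x := by
      rw [Finset.mul_sum]
      exact Finset.sum_congr rfl fun j _ => by ring
    have s2 : ∑ j, u t x j * (g i * pd i (pd j (φ t)) x)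
        = g i * ∑ j, u t x j * pd i (pd j (φ t)) x := by
      rw [Finset.mul_sum]
      exact Finset.sum_congr rfl fun j _ => by ring
    rw [pd_mul (dφt.fun_add ddot) (dg i), pD, Finset.sum_add_distrib, s1, s2]
    simp only [hg]
    ring
  have e3 : θ t x * ∑ j, u t x j * pd j (entS G f φ θ t) x
      = -(θ t x * ∑ j, u t x j * ∑ i, g i * pd i (pd j (φ t)) x)
        + dot (u t x) (grad (intE f φ θ t) x) - fφ * dot (u t x) (grad (φ t) x) := by
    unfold dot grad
    simp only [Finset.mul_sum (a := θ t x), Finset.mul_sum (a := fφ)]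
    rw [← Finset.sum_neg_distrib, ← Finset.sum_add_distrib, ← Finset.sum_sub_distrib]
    refine Finset.sum_congr rfl fun j _ => ?_
    linear_combination u t x j * Gx j
  -- The Korteweg work is exactly `θ` times that commutator paired with `∇G(∇φ)`.
  have e4 : ∑ i, ∑ j, korteweg G φ θ t x i j * pd i (fun y => u t y j) x
      = θ t x * ∑ i, ∑ j, g i * pd j (φ t) x * pd i (fun y => u t y j) x := by
    simp only [Finset.mul_sum]
    exact Finset.sum_congr rfl fun i _ => Finset.sum_congr rfl fun j _ => by
      simp only [korteweg, hg]; ring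
  have hμ : chemMu G f φ θ t x
      = -θ t x * divg (fun y => grad G (grad (φ t) y)) x + fφ := rfl
  have h0 : θ t x ≠ 0 := (hpos t x).ne'
  rw [e1, e2]
  rw [e4] at hIE
  apply mul_left_cancel₀ h0
  have hAC' : m / (θ t x) ^ 2 * (chemMu G f φ θ t x) ^ 2
      = -(chemMu G f φ θ t x / θ t x) * (dt φ t x + dot (u t x) (grad (φ t) x)) := by
    rw [hAC]; field_simp
  rw [hAC', hμ]
  field_simp
  linear_combination Gt + e3 + hIE

/-- Termwise integration of the entropy equation. -/
lemma integral_balance {α : Type*} [MeasurableSpace α] {ν : Measure α}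
    {a₁ a₂ b₁ b₂ b₃ b₄ b₅ : α → ℝ} (ha₁ : Integrable a₁ ν) (ha₂ : Integrable a₂ ν)
    (hb₁ : Integrable b₁ ν) (hb₂ : Integrable b₂ ν) (hb₃ : Integrable b₃ ν)
    (hb₄ : Integrable b₄ ν) (hb₅ : Integrable b₅ ν)
    (h : ∀ x, a₁ x + a₂ x = b₁ x - b₂ x + b₃ x - b₄ x + b₅ x) :
    ∫ x, a₁ x ∂ν + ∫ x, a₂ x ∂ν
      = ∫ x, b₁ x ∂ν - ∫ x, b₂ x ∂ν + ∫ x, b₃ x ∂ν - ∫ x, b₄ x ∂ν + ∫ x, b₅ x ∂ν := by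
  have h' : a₁ + a₂ = b₁ - b₂ + b₃ - b₄ + b₅ := funext h
  rw [← integral_add' ha₁ ha₂, h', integral_add' (((hb₁.sub hb₂).add hb₃).sub hb₄) hb₅,
    integral_sub' ((hb₁.sub hb₂).add hb₃) hb₄, integral_add' (hb₁.sub hb₂) hb₃,
    integral_sub' hb₁ hb₂]

end Entropy

/-- weak form of the entropy equation for periodic NACNS solutions. -/
theorem entropy_weak_form
    {d : ℕ} (hd : d = 1 ∨ d = 2 ∨ d = 3)
    (T : ℝ) (hT : 0 < T) (L : Fin d → ℝ) (hL : ∀ i, 0 < L i)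
    (G : (Fin d → ℝ) → ℝ) (hG : ContDiff ℝ 2 G)
    (f : ℝ → ℝ → ℝ)
    (hf : ContDiffOn ℝ 2 (fun q : ℝ × ℝ => f q.1 q.2) (Set.univ ×ˢ Set.Ioi 0))
    (M K η : ℝ → ℝ → ℝ)
    (hM : ContDiff ℝ (⊤ : ℕ∞) fun q : ℝ × ℝ => M q.1 q.2) (hMpos : ∀ a b, 0 < M a b)
    (hK : ContDiff ℝ (⊤ : ℕ∞) fun q : ℝ × ℝ => K q.1 q.2) (hKpos : ∀ a b, 0 < K a b)
    (hη : ContDiff ℝ (⊤ : ℕ∞) fun q : ℝ × ℝ => η q.1 q.2) (hηpos : ∀ a b, 0 < η a b)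
    (φ θ ptilde : ℝ → (Fin d → ℝ) → ℝ)
    (u : ℝ → (Fin d → ℝ) → Fin d → ℝ)
    (Q : ℝ → (Fin d → ℝ) → ℝ) (b : ℝ → (Fin d → ℝ) → Fin d → ℝ)
    (hφ : ContDiff ℝ (⊤ : ℕ∞) fun q : ℝ × (Fin d → ℝ) => φ q.1 q.2)
    (hθsm : ContDiff ℝ (⊤ : ℕ∞) fun q : ℝ × (Fin d → ℝ) => θ q.1 q.2)
    (hpsm : ContDiff ℝ (⊤ : ℕ∞) fun q : ℝ × (Fin d → ℝ) => ptilde q.1 q.2)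
    (husm : ContDiff ℝ (⊤ : ℕ∞) fun q : ℝ × (Fin d → ℝ) => u q.1 q.2)
    (hQsm : ContDiff ℝ (⊤ : ℕ∞) fun q : ℝ × (Fin d → ℝ) => Q q.1 q.2)
    (hbsm : ContDiff ℝ (⊤ : ℕ∞) fun q : ℝ × (Fin d → ℝ) => b q.1 q.2)
    (hθpos : ∀ t x, 0 < θ t x)
    (hφper : ∀ t, SpacePeriodic L (φ t))
    (hθper : ∀ t, SpacePeriodic L (θ t))
    (hpper : ∀ t, SpacePeriodic L (ptilde t))
    (huper : ∀ t j, SpacePeriodic L fun x => u t x j)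
    (hQper : ∀ t, SpacePeriodic L (Q t))
    (hbper : ∀ t j, SpacePeriodic L fun x => b t x j)
    -- (AC): ∂ₜφ + u·∇φ = -Mμ/θ
    (hAC : ∀ t ∈ Set.Ioo (0 : ℝ) T, ∀ x,
      dt φ t x + dot (u t x) (grad (φ t) x)
        = -(M (φ t x) (θ t x)) * chemMu G f φ θ t x / θ t x)
    -- (IE): ∂ₜe + u·∇e = -div(K∇(1/θ)) + η|Du|² - σ̃:∇u + Q
    (hIE : ∀ t ∈ Set.Ioo (0 : ℝ) T, ∀ x,
      dt (intE f φ θ) t x + dot (u t x) (grad (intE f φ θ t) x)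
        = -divg (fun y i => K (φ t y) (θ t y) * pd i (fun z => (θ t z)⁻¹) y) x
          + η (φ t x) (θ t x) * (∑ i, ∑ j, (symGrad (u t) x i j) ^ 2)
          - (∑ i, ∑ j, korteweg G φ θ t x i j * pd i (fun y => u t y j) x)
          + Q t x)
    -- (NS): ∂ₜu + (u·∇)u = div(ηDu) - ∇p̃ - div(σ̃) + b
    (hNS : ∀ t ∈ Set.Ioo (0 : ℝ) T, ∀ x, ∀ j,
      dt (fun s y => u s y j) t x + ∑ i, u t x i * pd i (fun y => u t y j) x
        = (∑ i, pd i (fun y => η (φ t y) (θ t y) * symGrad (u t) y i j) x)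
          - pd j (ptilde t) x
          - (∑ i, pd i (fun y => korteweg G φ θ t y i j) x)
          + b t x j)
    -- (DF): div(u) = 0
    (hDF : ∀ t ∈ Set.Ioo (0 : ℝ) T, ∀ x, divg (u t) x = 0)
    :
    ∀ ω : (Fin d → ℝ) → ℝ, ContDiff ℝ (⊤ : ℕ∞) ω → SpacePeriodic L ω →
      ∀ t ∈ Set.Ioo (0 : ℝ) T,
        (∫ x in box L, dt (entS G f φ θ) t x * ω x)
            - (∫ x in box L, entS G f φ θ t x * dot (u t x) (grad ω x))
          = (∫ x in box L,
              M (φ t x) (θ t x) / (θ t x) ^ 2 * (chemMu G f φ θ t x) ^ 2 * ω x)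
            + (∫ x in box L, K (φ t x) (θ t x) / (θ t x) ^ 2 *
                ∑ i, pd i (θ t) x *
                  (ω x / (θ t x) ^ 2 * pd i (θ t) x - (θ t x)⁻¹ * pd i ω x))
            + (∫ x in box L, η (φ t x) (θ t x) / θ t x *
                (∑ i, ∑ j, (symGrad (u t) x i j) ^ 2) * ω x)
            + (∫ x in box L, ∑ i,
                (grad G (grad (φ t) x) i * dt φ t x
                  + grad G (grad (φ t) x) i * dot (grad (φ t) x) (u t x)) * pd i ω x)
            + ∫ x in box L, Q t x * ω x / θ t x := by
  intro ω hω hωper t ht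
  have hd0 : d ≠ 0 := by omega
  have two_le : (2 : WithTop ℕ∞) ≤ ((⊤ : ℕ∞) : WithTop ℕ∞) := 
    WithTop.coe_le_coe.2 le_top
  have one_le : (1 : WithTop ℕ∞) ≤ ((⊤ : ℕ∞) : WithTop ℕ∞) := one_le_two.trans two_le
  have hφ2 := hφ.of_le two_le
  have hθ2 := hθsm.of_le two_le
  have hu1 := husm.of_le one_le
  have hω1 := hω.of_le one_le
  have hs := contDiff_entS hG hf hφ2 (hθsm.of_le one_le) hθpos
  have hφt2 := contDiff_slice hφ2 t
  have hθt2 := contDiff_slice hθ2 t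
  have hθt1 := hθt2.of_le one_le_two
  have hne : ∀ x, θ t x ≠ 0 := fun x => (hθpos t x).ne'
  have hui : ∀ i, ContDiff ℝ 1 fun x => u t x i := contDiff_pi.1 (contDiff_slice hu1 t)
  have hst := contDiff_slice hs t
  have hcomp : ContDiff ℝ 1 fun x => (φ t x, θ t x) := (hφt2.of_le one_le_two).prodMk hθt1
  have hD : ContDiff ℝ 1 fun y => dt φ t y + dot (u t y) (grad (φ t) y) :=
    (contDiff_slice (contDiff_dt hφ2 (m := 1) (by norm_num)) t).add
      (ContDiff.sum fun j _ => (hui j).mul (contDiff_pd_space hφt2 j))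
  have hinv2 : ContDiff ℝ 2 fun x => (θ t x)⁻¹ := hθt2.inv hne
  have hinv1 : ContDiff ℝ 1 fun x => (θ t x)⁻¹ := hinv2.of_le one_le_two
  have hinvper : SpacePeriodic L fun x => (θ t x)⁻¹ := fun x i => by simp only [hθper t x i]
  -- The fluxes that are integrated by parts: the transported entropy `V₁ = s u`, the interfacial
  -- flux `V₂ = (∂ₜφ + u·∇φ) ∇G(∇φ)`, and the heat flux `J = K ∇(1/θ)`.
  set V₁ : (Fin d → ℝ) → Fin d → ℝ := fun y i => entS G f φ θ t y * u t y i with hV₁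
  set V₂ : (Fin d → ℝ) → Fin d → ℝ := fun y i =>
    (dt φ t y + dot (u t y) (grad (φ t) y)) * grad G (grad (φ t) y) i with hV₂
  set J : (Fin d → ℝ) → Fin d → ℝ := fun y i =>
    K (φ t y) (θ t y) * pd i (fun z => (θ t z)⁻¹) y with hJ
  have cV₁ : ∀ i, ContDiff ℝ 1 fun x => V₁ x i := fun i => hst.mul (hui i)
  have cV₂ : ∀ i, ContDiff ℝ 1 fun x => V₂ x i := fun i =>
    hD.mul (contDiff_gradG hG hφt2 i)
  have cJ : ∀ i, ContDiff ℝ 1 fun x => J x i := fun i =>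
    ((hK.of_le one_le).comp hcomp).mul (contDiff_pd_space hinv2 i)
  have pV₁ : ∀ i, SpacePeriodic L fun x => V₁ x i := fun i x j => by
    simp only [hV₁, entS, (hφper t).grad x j, hφper t x j, hθper t x j, huper t i x j]
  have pdt : SpacePeriodic L (dt φ t) := fun x j => by
    simp only [dt, fun s => hφper s x j]
  have pu : ∀ x j, u t (x + Pi.single j (L j)) = u t x := fun x j =>
    funext fun i => huper t i x j
  have pV₂ : ∀ i, SpacePeriodic L fun x => V₂ x i := fun i x j => by
    simp only [hV₂, (hφper t).grad x j, pdt x j, pu x j]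
  have pJ : ∀ i, SpacePeriodic L fun x => J x i := fun i x j => by
    simp only [hJ, hφper t x j, hθper t x j, hinvper.pd i x j]
  have I₁ := integral_divg_mul hd0 hL cV₁ hω1 pV₁ hωper
  have I₂ := integral_divg_mul hd0 hL cV₂ hω1 pV₂ hωper
  -- The heat flux is tested against `ω / θ`, which produces the quadratic term in `∇θ`.
  have I₃ := integral_divg_mul hd0 hL cJ (hω1.mul hinv1) pJ
    (w := fun x => ω x * (θ t x)⁻¹) (fun x i => by simp only [hωper x i, hinvper x i])
  have strong : ∀ x, dt (entS G f φ θ) t x * ω x + divg V₁ x * ω x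
      = M (φ t x) (θ t x) / (θ t x) ^ 2 * (chemMu G f φ θ t x) ^ 2 * ω x
        - divg J x * (ω x * (θ t x)⁻¹)
        + η (φ t x) (θ t x) / θ t x * (∑ i, ∑ j, (symGrad (u t) x i j) ^ 2) * ω x
        - divg V₂ x * ω x + Q t x * ω x / θ t x := by
    intro x
    rw [← add_mul, entropy_strong hG hf hφ2 (hθsm.of_le one_le) hu1 hθpos
      (hAC t ht x) (hIE t ht x) (hDF t ht x)]
    ring
  have r₁ : (fun x => entS G f φ θ t x * dot (u t x) (grad ω x))
      = fun x => ∑ i, V₁ x i * pd i ω x := by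
    funext x
    simp only [dot, Finset.mul_sum, hV₁, grad, mul_assoc]
  have r₂ : (fun x => ∑ i, (grad G (grad (φ t) x) i * dt φ t x
        + grad G (grad (φ t) x) i * dot (grad (φ t) x) (u t x)) * pd i ω x)
      = fun x => ∑ i, V₂ x i * pd i ω x := by
    funext x
    have : dot (grad (φ t) x) (u t x) = dot (u t x) (grad (φ t) x) :=
      Finset.sum_congr rfl fun i _ => mul_comm _ _
    exact Finset.sum_congr rfl fun i _ => by simp only [hV₂, this]; ring
  have r₃ : (fun x => K (φ t x) (θ t x) / (θ t x) ^ 2 *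
        ∑ i, pd i (θ t) x * (ω x / (θ t x) ^ 2 * pd i (θ t) x - (θ t x)⁻¹ * pd i ω x))
      = fun x => ∑ i, J x i * pd i (fun y => ω y * (θ t y)⁻¹) x := by
    funext x
    rw [Finset.mul_sum]
    refine Finset.sum_congr rfl fun i _ => ?_
    have h0 := hne x
    have hdθ := hθt1.differentiable one_ne_zero x
    rw [pd_mul (hω1.differentiable one_ne_zero x) (hinv1.differentiable one_ne_zero x)]
    simp only [hJ]
    rw [pd_inv hdθ h0]
    field_simp
    ring
  rw [r₁, r₂, r₃]
  have ωc := hω.continuous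
  have θc := hθt1.continuous
  have i₀ : IntegrableOn (fun x => dt (entS G f φ θ) t x * ω x) (box L) :=
    integrableOn_box
      (((contDiff_dt hs (m := 0) (by norm_num)).continuous.comp (Continuous.prodMk_right t)).mul ωc)
  have i₁ : IntegrableOn (fun x => divg V₁ x * ω x) (box L) :=
    integrableOn_box ((continuous_divg cV₁).mul ωc)
  have i₂ : IntegrableOn (fun x => divg V₂ x * ω x) (box L) :=
    integrableOn_box ((continuous_divg cV₂).mul ωc)
  have i₃ : IntegrableOn (fun x => divg J x * (ω x * (θ t x)⁻¹)) (box L) :=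
    integrableOn_box ((continuous_divg cJ).mul (ωc.mul hinv1.continuous))
  have i₄ : IntegrableOn (fun x =>
      M (φ t x) (θ t x) / (θ t x) ^ 2 * (chemMu G f φ θ t x) ^ 2 * ω x) (box L) := by
    -- By (AC) the integrand is `(∂ₜφ + u·∇φ)² ω / M`, which is visibly continuous.
    have : (fun x => M (φ t x) (θ t x) / (θ t x) ^ 2 * (chemMu G f φ θ t x) ^ 2 * ω x)
        = fun x => (dt φ t x + dot (u t x) (grad (φ t) x)) ^ 2 / M (φ t x) (θ t x) * ω x := by
      funext x
      have h0 := hne x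
      have hM0 := (hMpos (φ t x) (θ t x)).ne'
      rw [hAC t ht x]
      field_simp
    rw [this]
    exact integrableOn_box (((hD.continuous.pow 2).div
      (hM.continuous.comp hcomp.continuous) fun x => (hMpos _ _).ne').mul ωc)
  have i₅ : IntegrableOn (fun x =>
      η (φ t x) (θ t x) / θ t x * (∑ i, ∑ j, (symGrad (u t) x i j) ^ 2) * ω x) (box L) := by
    refine integrableOn_box ((((hη.continuous.comp hcomp.continuous).div θc hne).mul
      (continuous_finsetSum _ fun i _ => continuous_finsetSum _ fun j _ => ?_)).mul ωc)
    exact (((continuous_pd (hui j) i).add (continuous_pd (hui i) j)).div_const 2).pow 2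
  have i₆ : IntegrableOn (fun x => Q t x * ω x / θ t x) (box L) :=
    integrableOn_box (((contDiff_slice hQsm t).continuous.mul ωc).div θc hne)
  have hint := integral_balance i₀ i₁ i₄ i₃ i₅ i₂ i₆ strong
  linarith
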